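/- Work over ℤ[D₈], the integral group ring of the dihedral group of order 8 (the case n = 2), and let J = ker ∂₂ be the algebraic π₂ of the standard resolution. If M is a finitely generated ℤ[D₈]-module and M ⊕ ℤ[D₈]^r ≅ J ⊕ ℤ[D₈]^s for some natural numbers r, s, then s ≥ r and M ≅ J ⊕ ℤ[D₈]^{s−r}. -/

import Mathlib

/- `ℤ[D₈]` is `MonoidAlgebra ℤ (DihedralGroup 4)` (Mathlib's `DihedralGroup 4` has order 8).
Right `ℤ[D₈]`-modules are modules over the opposite ring `ℤ[D₈]ᵐᵒᵖ`; left multiplication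
by a fixed ring element is a right-module endomorphism.  `a = r 1`, `b = sr 0`,
`Σ = 1 + a + a² + a³`, `∂₂ : (x,y,z) ↦ (Σx + (1+ba)z, (1+b)y + (a−1)z)` and `J = ker ∂₂`. -/

noncomputable section

abbrev R8 : Type := MonoidAlgebra ℤ (DihedralGroup 4)

def gena : R8 := MonoidAlgebra.of ℤ (DihedralGroup 4) (DihedralGroup.r 1)

def genb : R8 := MonoidAlgebra.of ℤ (DihedralGroup 4) (DihedralGroup.sr 0)

/-- `Σ = 1 + a + a² + a³`. -/
def sig : R8 := ∑ i ∈ Finset.range 4, gena ^ i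

/-- Left multiplication by `c`, as a right `ℤ[D₈]`-module map. -/
def mulLeftOp (c : R8) : R8 →ₗ[R8ᵐᵒᵖ] R8 := LinearMap.mulLeft R8ᵐᵒᵖ c

/-- `∂₂ : ℤ[D₈]³ → ℤ[D₈]²`, `(x,y,z) ↦ (Σx + (1+ba)z, (1+b)y + (a−1)z)`, as a right
`ℤ[D₈]`-module map. -/
def bdry2 : (R8 × R8 × R8) →ₗ[R8ᵐᵒᵖ] (R8 × R8) :=
  LinearMap.prod
    ((mulLeftOp sig).comp (LinearMap.fst R8ᵐᵒᵖ R8 (R8 × R8)) +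
      (mulLeftOp (1 + genb * gena)).comp
        ((LinearMap.snd R8ᵐᵒᵖ R8 R8).comp (LinearMap.snd R8ᵐᵒᵖ R8 (R8 × R8))))
    ((mulLeftOp (1 + genb)).comp
        ((LinearMap.fst R8ᵐᵒᵖ R8 R8).comp (LinearMap.snd R8ᵐᵒᵖ R8 (R8 × R8))) +
      (mulLeftOp (gena - 1)).comp
        ((LinearMap.snd R8ᵐᵒᵖ R8 R8).comp (LinearMap.snd R8ᵐᵒᵖ R8 (R8 × R8))))

/-- `J = ker ∂₂`, the algebraic `π₂` of the standard resolution over `ℤ[D₈]`. -/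
def J : Submodule R8ᵐᵒᵖ (R8 × R8 × R8) := LinearMap.ker bdry2

/-!
By induction on the rank of the free summand, it is enough to cancel one copy of `R = ℤ[D₈]` from
`M ⊕ R ≅ P ⊕ R` with `P = J ⊕ Rⁿ`, and for this it is enough that every surjection
`(g, c) : P ⊕ R → R` is carried to the projection by an automorphism. Automorphisms are provided by
shears, which add `c h` to `g` or `g p` to `c`.

If `n > 0`, then `g` contains an entry in `R`, and `R / m` is finite, hence of stable range one, for
every `m ≠ 0`. Elements of odd augmentation divide an odd integer, since `D₈` is a `2`-group; so the
row can be made unimodular without its `J`-part, which is then replaced by a map onto the elements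
of even augmentation.

If `n = 0`, a homomorphism `g : J → R` has a degree `d`, and `(d, ε c)` changes under shears by the
Euclidean algorithm on `2d` and `ε c`. This reduces to `d = -1`, and then modulo `16` to
`g = coordSum + 16 h`, where `coordSum` has degree `-1` and maps `J` onto the elements of even
augmentation. Explicit elements `κ` and `ζ` of `J` together with stable range one for an odd modulus
yield one more shear after which `8` lies in the image of `g`; then `g` is also onto the elements of
even augmentation and `c` can be changed to `1`.

The inequality `r ≤ s` is seen by reducing the augmentation modulo `2`, which kills every
homomorphism `J → R`.
-/

section StableRange

variable {A : Type*} [Ring A]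

theorem exists_linearMap_ne_zero_of_prodEquiv {K L C : Type*} [AddCommGroup K] [AddCommGroup L]
    [AddCommGroup C] [Module A K] [Module A L] [Module A C] [Finite K] [Finite L] [Finite C]
    [Nontrivial C] (e : (K × L) ≃ₗ[A] (C × L)) : ∃ ψ : K →ₗ[A] C, ψ ≠ 0 := by
  have : Finite (K →ₗ[A] C) := DFunLike.finite _
  have : Finite (L →ₗ[A] C) := DFunLike.finite _
  have : Finite (C →ₗ[A] C) := DFunLike.finite _
  have card_prod_hom : Nat.card (K →ₗ[A] C) * Nat.card (L →ₗ[A] C) =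
      Nat.card (C →ₗ[A] C) * Nat.card (L →ₗ[A] C) := by
    simp only [← Nat.card_prod]
    exact Nat.card_congr (((LinearMap.coprodEquiv ℕ).toEquiv.trans
      (LinearEquiv.congrLeft C ℕ e).toEquiv).trans (LinearMap.coprodEquiv ℕ).toEquiv.symm)
  have card_hom : Nat.card (K →ₗ[A] C) = Nat.card (C →ₗ[A] C) :=
    Nat.eq_of_mul_eq_mul_right Nat.card_pos card_prod_hom
  have : Nontrivial (C →ₗ[A] C) := inferInstanceAs (Nontrivial (Module.End A C))
  have : Nontrivial (K →ₗ[A] C) := by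
    rw [← Finite.one_lt_card_iff_nontrivial, card_hom]
    exact Finite.one_lt_card
  exact exists_ne 0

theorem exists_span_singleton_lt_span_add_mul [Finite A] [IsSemisimpleRing A] {a b : A}
    (hab : Ideal.span {a} ⊔ Ideal.span {b} = ⊤) (ha : Ideal.span {a} ≠ ⊤) :
    ∃ t, Ideal.span {a} < Ideal.span {a + t * b} := by
  obtain ⟨C, hCb, hC⟩ := (codisjoint_iff.2 (sup_comm _ _ |>.trans hab)).exists_isCompl
  let φ : A →ₗ[A] A := LinearMap.toSpanSingleton A A a
  obtain ⟨L, hL⟩ := exists_isCompl (LinearMap.ker φ)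
  have range_φ : LinearMap.range φ = Ideal.span {a} := LinearMap.range_toSpanSingleton a
  let spanEquiv : L ≃ₗ[A] Ideal.span {a} :=
    (Submodule.quotientEquivOfIsCompl _ L hL).symm.trans
      (φ.quotKerEquivRange.trans (LinearEquiv.ofEq _ _ range_φ))
  have : Nontrivial C := Submodule.nontrivial_iff_ne_bot.2 fun h => ha (by
    simpa [h] using hC.sup_eq_top)
  obtain ⟨ψ, hψ⟩ := exists_linearMap_ne_zero_of_prodEquiv
    (((Submodule.prodEquivOfIsCompl _ L hL).trans
      (Submodule.prodEquivOfIsCompl _ _ hC).symm).trans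
        (LinearEquiv.prodCongr (LinearEquiv.refl A C) spanEquiv.symm))
  let π := Submodule.projectionOnto _ L hL
  let s : A := ψ (π 1)
  have ψ_π_apply (x : A) : (ψ (π x) : A) = x * s := by
    rw [← smul_eq_mul, ← Submodule.coe_smul, ← map_smul, ← map_smul, smul_eq_mul, mul_one]
  have π_one_mul_a : (π 1 : A) * a = 0 := LinearMap.mem_ker.1 (π 1).2
  have π_one_mul_s : (π 1 : A) * s = s := by
    rw [← ψ_π_apply, Submodule.projectionOnto_apply_left]
  have s_mem_span_add : s ∈ Ideal.span {a + s} :=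
    Ideal.mem_span_singleton'.2 ⟨π 1, by rw [mul_add, π_one_mul_a, zero_add, π_one_mul_s]⟩
  have s_notMem_span : s ∉ Ideal.span {a} := fun hs => hψ <| LinearMap.ext fun k => by
    have s_eq_zero : s = 0 := Submodule.disjoint_def.1 hC.disjoint s (ψ (π 1)).2 hs
    rw [← Submodule.projectionOnto_apply_left hL k]
    exact Subtype.ext ((ψ_π_apply k).trans (by rw [s_eq_zero, mul_zero]; rfl))
  obtain ⟨t, ht⟩ := Ideal.mem_span_singleton'.1 (hCb (ψ (π 1)).2)
  refine ⟨t, ?_⟩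
  rw [ht]
  refine lt_of_le_of_ne (Ideal.span_singleton_le_iff_mem _ |>.2 ?_)
    fun h => s_notMem_span (h ▸ s_mem_span_add)
  simpa using sub_mem (Ideal.mem_span_singleton_self (a + s)) s_mem_span_add

theorem exists_span_add_mul_eq_top_of_isSemisimpleRing [Finite A] [IsSemisimpleRing A] {a b : A}
    (hab : Ideal.span {a} ⊔ Ideal.span {b} = ⊤) : ∃ t, Ideal.span {a + t * b} = ⊤ := by
  induction h : Ideal.span {a} using WellFoundedGT.induction generalizing a with
  | ind I ih =>
    by_cases ha : Ideal.span {a} = ⊤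
    · exact ⟨0, by simpa using ha⟩
    obtain ⟨t, ht⟩ := exists_span_singleton_lt_span_add_mul hab ha
    obtain ⟨u, hu⟩ := ih _ (h ▸ ht) (top_le_iff.1 (hab.ge.trans (sup_le_sup_right ht.le _))) rfl
    exact ⟨t + u, by rwa [add_mul, ← add_assoc]⟩

theorem exists_isUnit_add_mul [Finite A] {a b : A}
    (hab : Ideal.span {a} ⊔ Ideal.span {b} = ⊤) : ∃ t, IsUnit (a + t * b) := by
  have : IsSemisimpleRing (A ⧸ Ring.jacobson A) :=
    IsArtinianRing.isSemisimpleRing_iff_jacobson.mpr (Ring.jacobson_quotient_jacobson A)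
  let π := Ideal.Quotient.mk (Ring.jacobson A)
  have : Finite (A ⧸ Ring.jacobson A) := Finite.of_surjective π Ideal.Quotient.mk_surjective
  have map_span (x : A) : (Ideal.span {x}).map π = Ideal.span {π x} := by
    rw [Ideal.map_span, Set.image_singleton]
  obtain ⟨t', ht⟩ := exists_span_add_mul_eq_top_of_isSemisimpleRing (a := π a) (b := π b) (by
    rw [← map_span, ← map_span, ← Ideal.map_sup, hab, Ideal.map_top])
  obtain ⟨t, rfl⟩ := Ideal.Quotient.mk_surjective t'
  obtain ⟨w', hw⟩ := Ideal.mem_span_singleton'.1 (ht.ge (Submodule.mem_top (x := 1)))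
  obtain ⟨w, rfl⟩ := Ideal.Quotient.mk_surjective w'
  have mem_jacobson : w * (a + t * b) - 1 ∈ Ideal.jacobson (⊥ : Ideal A) := by
    rw [Ideal.jacobson_bot, ← Ideal.Quotient.eq]
    simpa [π] using hw
  obtain ⟨s, hs⟩ := Ideal.exists_mul_sub_mem_of_sub_one_mem_jacobson _ mem_jacobson
  rw [Ideal.mem_bot, sub_eq_zero, ← mul_assoc] at hs
  exact ⟨t, .of_mul_eq_one_right _ hs⟩

end StableRange

section FiniteOverInt

variable {A : Type*} [Ring A]

theorem finite_quotient_span_intCast [Module.Finite ℤ A] {n : ℤ} (hn : n ≠ 0) :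
    Finite (A ⧸ Ideal.span {(n : A)}) := by
  refine Module.finite_of_fg_torsion _ fun x => ?_
  obtain ⟨x, rfl⟩ := Submodule.Quotient.mk_surjective _ x
  refine ⟨⟨n, mem_nonZeroDivisors_of_ne_zero hn⟩, ?_⟩
  rw [Submonoid.mk_smul, ← Submodule.Quotient.mk_smul, Submodule.Quotient.mk_eq_zero, zsmul_eq_mul,
    (Int.cast_commute n x).eq]
  exact Ideal.mul_mem_left _ _ (Ideal.mem_span_singleton_self _)

theorem exists_intCast_dvd_add_mul_mul_sub_one [Module.Finite ℤ A] {n : ℤ} (hn : n ≠ 0)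
    {a b y z : A} (h : (n : A) ∣ a * y + b * z - 1) :
    ∃ t w, (n : A) ∣ (a + b * t) * w - 1 := by
  have mem_span_iff (x : A) : x ∈ Ideal.span {(n : A)} ↔ (n : A) ∣ x := by
    rw [Ideal.mem_span_singleton', dvd_def]
    exact exists_congr fun q => by rw [(Int.cast_commute n q).eq, eq_comm]
  have : (Ideal.span {(n : A)}).IsTwoSided := ⟨fun {x} y hx => by
    rw [mem_span_iff] at hx ⊢
    exact hx.mul_right y⟩
  have := finite_quotient_span_intCast (A := A) hn
  have : Finite (A ⧸ Ideal.span {(n : A)})ᵐᵒᵖ := .of_equiv _ MulOpposite.opEquiv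
  let π := Ideal.Quotient.mk (Ideal.span {(n : A)})
  have π_eq_iff (x y : A) : π x = π y ↔ (n : A) ∣ x - y := Ideal.Quotient.eq.trans (mem_span_iff _)
  obtain ⟨t', ht⟩ := exists_isUnit_add_mul (a := MulOpposite.op (π a)) (b := .op (π b)) <| by
    rw [Ideal.eq_top_iff_one]
    refine Submodule.mem_sup.2 ⟨_, Ideal.mem_span_singleton'.2 ⟨.op (π y), rfl⟩, _,
      Ideal.mem_span_singleton'.2 ⟨.op (π z), rfl⟩, ?_⟩
    rw [← MulOpposite.op_mul, ← MulOpposite.op_mul, ← MulOpposite.op_add, ← map_mul, ← map_mul,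
      ← map_add, (π_eq_iff _ _).2 h, map_one, MulOpposite.op_one]
  obtain ⟨t, ht'⟩ := Ideal.Quotient.mk_surjective t'.unop
  obtain ⟨w', hw⟩ := ht.unop.exists_right_inv
  obtain ⟨w, rfl⟩ := Ideal.Quotient.mk_surjective w'
  refine ⟨t, w, (π_eq_iff _ _).1 ?_⟩
  simpa [π, ht'] using hw

theorem exists_mul_eq_algebraMap_of_mul_eq_one_add_smul {k : Type*} [CommRing k] [Algebra k A]
    [Module.Finite k A] {p : k} {x y q : A} (h : x * y = 1 + p • q) :
    ∃ s n, p ∣ n - 1 ∧ x * s = algebraMap k A n := by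
  obtain ⟨n, hn, hle⟩ := Submodule.exists_sub_one_mem_and_smul_le_of_fg_of_le_sup
    (I := Ideal.span {p}) (N := LinearMap.range (LinearMap.mulLeft k x)) (N' := ⊤) (P := ⊤)
    Module.Finite.fg_top le_rfl fun z _ => by
      have z_eq : z = x * (y * z) - p • (q * z) := by
        rw [← mul_assoc, h, add_mul, one_mul, smul_mul_assoc, add_sub_cancel_right]
      rw [z_eq]
      exact sub_mem (Submodule.mem_sup_left ⟨y * z, rfl⟩) (Submodule.mem_sup_right
        (Submodule.smul_mem_smul (Ideal.mem_span_singleton_self p) trivial))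
  obtain ⟨s, hs⟩ := hle (Submodule.smul_mem_pointwise_smul 1 n ⊤ trivial)
  exact ⟨s, n, Ideal.mem_span_singleton.1 hn, hs.trans (Algebra.algebraMap_eq_smul_one n).symm⟩

end FiniteOverInt

section GroupRing

open MonoidAlgebra

section Augmentation

variable {k G : Type*} [CommRing k]

variable (k G) in
/-- The norm element `∑ g` of the group ring of a finite group. -/
def normElement [Fintype G] : MonoidAlgebra k G := ∑ g : G, single g 1

@[simp]
theorem coeff_normElement [Fintype G] (g : G) : (normElement k G).coeff g = 1 := by
  classical
  simp [normElement]

section Monoid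

variable [Monoid G]

variable (k G) in
/-- The augmentation `k[G] → k` of a monoid ring, sending every element of `G` to `1`. -/
def augmentation : MonoidAlgebra k G →ₐ[k] k := MonoidAlgebra.lift k k G 1

@[simp]
theorem augmentation_single (g : G) (c : k) : augmentation k G (single g c) = c := by
  simp [augmentation]

theorem augmentation_mapRingHom {l : Type*} [CommRing l] (f : k →+* l)
    (x : MonoidAlgebra k G) :
    augmentation l G (mapRingHom G f x) = f (augmentation k G x) := by
  induction x using MonoidAlgebra.induction_linear with
  | zero => simp
  | add x y hx hy => simp only [map_add, hx, hy]
  | single g c => simp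

theorem exists_zsmul_eq_of_mapRingHom_eq_zero {n : ℕ} {x : MonoidAlgebra ℤ G}
    (hx : mapRingHom G (Int.castRingHom (ZMod n)) x = 0) : ∃ q, x = (n : ℤ) • q := by
  have dvd_coeff (g : G) : (n : ℤ) ∣ x.coeff g := by
    rw [← ZMod.intCast_zmod_eq_zero_iff_dvd]
    simpa using congrArg (fun y => y.coeff g) hx
  refine ⟨ofCoeff (x.coeff.mapRange (· / (n : ℤ)) (Int.zero_ediv _)), ?_⟩
  ext g
  exact (Int.mul_ediv_cancel' (dvd_coeff g)).symm

end Monoid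

variable [Group G] [Fintype G]

theorem mul_normElement (x : MonoidAlgebra k G) :
    x * normElement k G = augmentation k G x • normElement k G := by
  induction x using MonoidAlgebra.induction_linear with
  | zero => simp
  | add x y hx hy => rw [add_mul, hx, hy, map_add, add_smul]
  | single g c =>
    simp only [normElement, Finset.mul_sum, Finset.smul_sum, single_mul_single, smul_single,
      augmentation_single, smul_eq_mul]
    exact Fintype.sum_equiv (Equiv.mulLeft g) _ _ fun _ => rfl

theorem normElement_mul (x : MonoidAlgebra k G) :
    normElement k G * x = augmentation k G x • normElement k G := by
  induction x using MonoidAlgebra.induction_linear with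
  | zero => simp
  | add x y hx hy => rw [mul_add, hx, hy, map_add, add_smul]
  | single g c =>
    simp only [normElement, Finset.sum_mul, Finset.smul_sum, single_mul_single, smul_single,
      augmentation_single, smul_eq_mul, mul_one, one_mul]
    exact Fintype.sum_equiv (Equiv.mulRight g) _ _ fun _ => rfl

theorem eq_smul_normElement_of_single_mul_eq {x : MonoidAlgebra k G}
    (hx : ∀ g : G, single g 1 * x = x) : x = x.coeff 1 • normElement k G := by
  ext g
  conv_lhs => rw [← hx g]
  simp

end Augmentation

section PGroup

variable {p : ℕ} [Fact p.Prime] {G : Type*} [Group G] [Finite G]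

/-- If `y * x = 0` with `y ≠ 0`, the `p`-group `G` acts on the finite `p`-torsion group of all such
`y`, hence fixes a nonzero one; this is a multiple of the norm element, which `x` cannot kill. -/
theorem isUnit_of_isUnit_augmentation (hG : IsPGroup p G) {k : Type*} [CommRing k] [Finite k]
    [CharP k p] {x : MonoidAlgebra k G} (hx : IsUnit (augmentation k G x)) : IsUnit x := by
  cases nonempty_fintype G
  have : Finite (MonoidAlgebra k G) := .of_injective (fun y => (y.coeff : G → k)) fun _ _ h =>
    MonoidAlgebra.ext (DFunLike.coe_injective h)
  let V : AddSubgroup (MonoidAlgebra k G) := (AddMonoidHom.mulRight x).ker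
  let _ : MulAction G V :=
    { smul g y := ⟨single g 1 * y.1, by
        rw [AddMonoidHom.mem_ker, AddMonoidHom.mulRight_apply, mul_assoc]
        exact (congrArg _ y.2).trans (mul_zero _)⟩
      one_smul y := Subtype.ext (one_mul _)
      mul_smul g h y := Subtype.ext (by
        change single (g * h) 1 * y.1 = single g 1 * (single h 1 * y.1)
        rw [← mul_assoc, single_mul_single, one_mul]) }
  have fixed_eq_zero (y : V) (hy : y ∈ MulAction.fixedPoints G V) : y = 0 := by
    have y_eq := eq_smul_normElement_of_single_mul_eq fun g => congrArg Subtype.val (hy g)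
    have y_mul : y.1 * x = 0 := y.2
    rw [y_eq, smul_mul_assoc, normElement_mul, smul_smul] at y_mul
    have coeff_eq : y.1.coeff 1 * augmentation k G x = 0 := by
      simpa using congrArg (fun z => z.coeff 1) y_mul
    rw [hx.mul_left_eq_zero] at coeff_eq
    exact Subtype.ext (by rw [y_eq, coeff_eq, zero_smul]; rfl)
  have V_eq_bot : V = ⊥ := by
    refine (AddSubgroup.eq_bot_iff_forall _).2 fun y hy => by_contra fun y_ne => ?_
    have dvd_card : p ∣ Nat.card V := by
      rw [← addOrderOf_eq_prime (x := (⟨y, hy⟩ : V)) (p := p) _ (by simpa using y_ne)]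
      · exact addOrderOf_dvd_natCard _
      · exact Subtype.ext (by simp [← Nat.cast_smul_eq_nsmul k])
    obtain ⟨z, hz, z_ne⟩ := hG.exists_fixed_point_of_prime_dvd_card_of_fixed_point V dvd_card
      (a := 0) fun g => Subtype.ext (mul_zero _)
    exact z_ne (fixed_eq_zero z hz).symm
  obtain ⟨y, hy⟩ := Finite.surjective_of_injective
    ((AddMonoidHom.ker_eq_bot_iff (AddMonoidHom.mulRight x)).1 V_eq_bot) 1
  exact .of_mul_eq_one_right _ hy

theorem exists_mul_eq_intCast_of_not_dvd_augmentation (hG : IsPGroup p G) {x : MonoidAlgebra ℤ G}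
    (hx : ¬ (p : ℤ) ∣ augmentation ℤ G x) :
    ∃ (s : MonoidAlgebra ℤ G) (n : ℤ), (p : ℤ) ∣ n - 1 ∧ x * s = n := by
  let π := mapRingHom G (Int.castRingHom (ZMod p))
  have isUnit_π : IsUnit (π x) := isUnit_of_isUnit_augmentation hG <| by
    rw [augmentation_mapRingHom, isUnit_iff_ne_zero]
    exact fun h => hx ((ZMod.intCast_zmod_eq_zero_iff_dvd _ _).1 h)
  obtain ⟨y', hy⟩ := isUnit_π.exists_right_inv
  have π_surjective : Function.Surjective π :=
    map_surjective (Int.castRingHom (ZMod p)).toAddMonoidHom ZMod.intCast_surjective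
  obtain ⟨y, rfl⟩ := π_surjective y'
  obtain ⟨q, hq⟩ := exists_zsmul_eq_of_mapRingHom_eq_zero (n := p) (x := x * y - 1) <| by
    rw [map_sub, map_mul, hy, map_one, sub_self]
  obtain ⟨s, n, hn, hs⟩ := exists_mul_eq_algebraMap_of_mul_eq_one_add_smul
    (eq_add_of_sub_eq' hq)
  exact ⟨s, n, hn, hs⟩

end PGroup

theorem sub_augmentation_mem {k G : Type*} [CommRing k] [Group G] {S : Set G}
    (hS : Subgroup.closure S = ⊤) {I : Submodule (MonoidAlgebra k G)ᵐᵒᵖ (MonoidAlgebra k G)}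
    (hI : ∀ g ∈ S, single g 1 - 1 ∈ I) (x : MonoidAlgebra k G) :
    x - algebraMap k _ (augmentation k G x) ∈ I := by
  have mul_mem {y : MonoidAlgebra k G} (hy : y ∈ I) (z : MonoidAlgebra k G) : y * z ∈ I :=
    I.smul_mem (MulOpposite.op z) hy
  have single_sub_one_mem (g : G) : (single g 1 - 1 : MonoidAlgebra k G) ∈ I := by
    induction (hS.ge (Subgroup.mem_top g)) using Subgroup.closure_induction with
    | mem g hg => exact hI g hg
    | one => simp [one_def]
    | mul g h _ _ hg hh =>
      convert! add_mem (mul_mem hg (single h 1)) hh using 1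
      simp [sub_mul, single_mul_single]
    | inv g _ hg =>
      convert! neg_mem (mul_mem hg (single g⁻¹ 1)) using 1
      simp [sub_mul, single_mul_single, one_def]
  induction x using MonoidAlgebra.induction_linear with
  | zero => simp
  | add x y hx hy =>
    convert! add_mem hx hy using 1
    simp only [map_add]; abel
  | single g c =>
    convert! mul_mem (single_sub_one_mem g) (algebraMap k _ c) using 1
    simp [sub_mul, single_mul_single]

end GroupRing

section Rows

variable {A : Type*} [Ring A] {P Q : Type*} [AddCommGroup P] [Module Aᵐᵒᵖ P] [AddCommGroup Q]
  [Module Aᵐᵒᵖ Q]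

theorem map_op_smul (g : P →ₗ[Aᵐᵒᵖ] A) (x : A) (p : P) : g (MulOpposite.op x • p) = g p * x :=
  map_smul g _ p

/-- The row `(g, c)`: the map `(p, x) ↦ g p + c x` of right modules. -/
def row (g : P →ₗ[Aᵐᵒᵖ] A) (c : A) : P × A →ₗ[Aᵐᵒᵖ] A := g.coprod (LinearMap.mulLeft Aᵐᵒᵖ c)

@[simp]
theorem row_apply (g : P →ₗ[Aᵐᵒᵖ] A) (c : A) (x : P × A) : row g c x = g x.1 + c * x.2 := rfl

theorem eq_row (f : P × A →ₗ[Aᵐᵒᵖ] A) : f = row (f ∘ₗ LinearMap.inl Aᵐᵒᵖ P A) (f (0, 1)) := by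
  ext x
  · simp
  · simp [← Prod.zero_eq_mk]

/-- The shear `(p, x) ↦ (p, x + h p)`. -/
def shearSnd (h : P →ₗ[Aᵐᵒᵖ] A) : (P × A) ≃ₗ[Aᵐᵒᵖ] P × A :=
  (LinearEquiv.refl _ P).skewProd (LinearEquiv.refl _ A) h

variable (A) in
/-- The shear `(q, x) ↦ (q + p x, x)`. -/
def shearFst (p : P) : (P × A) ≃ₗ[Aᵐᵒᵖ] P × A :=
  (LinearEquiv.prodComm _ P A).trans
    (((LinearEquiv.refl _ A).skewProd (LinearEquiv.refl _ P)
      { toFun x := MulOpposite.op x • p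
        map_add' x y := by rw [MulOpposite.op_add, add_smul]
        map_smul' r x := by simp [smul_smul] }).trans (LinearEquiv.prodComm _ A P))

theorem row_comp_shearSnd (g h : P →ₗ[Aᵐᵒᵖ] A) (c : A) :
    row g c ∘ₗ shearSnd h = row (g + LinearMap.mulLeft Aᵐᵒᵖ c ∘ₗ h) c := by
  refine LinearMap.ext fun x => ?_
  change g x.1 + c * (x.2 + h x.1) = g x.1 + c * h x.1 + c * x.2
  rw [mul_add]
  abel

theorem row_comp_shearFst (g : P →ₗ[Aᵐᵒᵖ] A) (c : A) (p : P) :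
    row g c ∘ₗ shearFst A p = row g (c + g p) := by
  refine LinearMap.ext fun x => ?_
  change g (x.1 + MulOpposite.op x.2 • p) + c * x.2 = g x.1 + (c + g p) * x.2
  rw [map_add, map_op_smul, add_mul]
  abel

theorem row_comp_prodCongr_refl (g : P →ₗ[Aᵐᵒᵖ] A) (c : A) (e : P ≃ₗ[Aᵐᵒᵖ] P) :
    row g c ∘ₗ (e.prodCongr (LinearEquiv.refl Aᵐᵒᵖ A)).toLinearMap = row (g ∘ₗ e.toLinearMap) c :=
  rfl

/-- A map `P × A → A` is reducible if an automorphism of `P × A` carries it to the projection. -/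
def IsReducible (f : P × A →ₗ[Aᵐᵒᵖ] A) : Prop :=
  ∃ e : (P × A) ≃ₗ[Aᵐᵒᵖ] P × A, f ∘ₗ e = LinearMap.snd Aᵐᵒᵖ P A

theorem IsReducible.of_comp {f : P × A →ₗ[Aᵐᵒᵖ] A} (e : (P × A) ≃ₗ[Aᵐᵒᵖ] P × A)
    (h : IsReducible (f ∘ₗ e.toLinearMap)) : IsReducible f := by
  obtain ⟨e', he'⟩ := h
  exact ⟨e'.trans e, he'⟩

theorem IsReducible.of_comp_of_surjective {f : P × A →ₗ[Aᵐᵒᵖ] A} (e : (P × A) ≃ₗ[Aᵐᵒᵖ] P × A)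
    (h : Function.Surjective (f ∘ₗ e.toLinearMap) → IsReducible (f ∘ₗ e.toLinearMap))
    (hf : Function.Surjective f) : IsReducible f :=
  .of_comp e (h (hf.comp e.surjective))

theorem isReducible_row_one (g : P →ₗ[Aᵐᵒᵖ] A) : IsReducible (row g 1) := by
  refine ⟨shearSnd (-g), ?_⟩
  rw [row_comp_shearSnd]
  ext x <;> simp

theorem isReducible_row_of_exists_apply_eq {g : P →ₗ[Aᵐᵒᵖ] A} {c : A} (h : ∃ p, g p = 1 - c) :
    IsReducible (row g c) := by
  obtain ⟨p, hp⟩ := h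
  refine .of_comp (shearFst A p) ?_
  rw [row_comp_shearFst, hp, add_sub_cancel]
  exact isReducible_row_one g

variable (A P) in
/-- `P` is cancellable if every surjection `P × A → A` is reducible; then `P` may be cancelled
against one free summand, see `IsCancellable.nonempty_linearEquiv`. -/
def IsCancellable : Prop := ∀ f : P × A →ₗ[Aᵐᵒᵖ] A, Function.Surjective f → IsReducible f

theorem IsCancellable.congr (i : P ≃ₗ[Aᵐᵒᵖ] Q) (hP : IsCancellable A P) : IsCancellable A Q := by
  intro f hf
  let i' := i.prodCongr (LinearEquiv.refl Aᵐᵒᵖ A)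
  obtain ⟨e, he⟩ := hP (f ∘ₗ i') (hf.comp i'.surjective)
  exact ⟨i'.symm.trans (e.trans i'), LinearMap.ext fun x => LinearMap.congr_fun he (i'.symm x)⟩

theorem IsCancellable.nonempty_linearEquiv (hP : IsCancellable A P)
    (φ : (Q × A) ≃ₗ[Aᵐᵒᵖ] P × A) : Nonempty (Q ≃ₗ[Aᵐᵒᵖ] P) := by
  obtain ⟨e, he⟩ := hP (LinearMap.snd Aᵐᵒᵖ Q A ∘ₗ φ.symm)
    (Prod.snd_surjective.comp φ.symm.surjective)
  have map_ker : (Submodule.fst Aᵐᵒᵖ P A).map (e.trans φ.symm).toLinearMap =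
      Submodule.fst Aᵐᵒᵖ Q A := by
    rw [Submodule.map_equiv_eq_comap_symm, Submodule.fst, Submodule.fst, ← he]
    ext; simp
  exact ⟨((Submodule.fstEquiv Aᵐᵒᵖ P A).symm.trans
    ((LinearEquiv.ofSubmodules _ _ _ map_ker).trans (Submodule.fstEquiv Aᵐᵒᵖ Q A))).symm⟩

variable (A P) in
/-- Splitting off one free summand: `P ⊕ Aⁿ⁺¹ ≃ (P ⊕ Aⁿ) ⊕ A`. -/
def prodFinSuccEquiv (n : ℕ) : (P × (Fin (n + 1) → A)) ≃ₗ[Aᵐᵒᵖ] (P × (Fin n → A)) × A :=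
  ((LinearEquiv.refl Aᵐᵒᵖ P).prodCongr
    ((Fin.consLinearEquiv Aᵐᵒᵖ fun _ : Fin (n + 1) => A).symm.trans
      (LinearEquiv.prodComm Aᵐᵒᵖ A (Fin n → A)))).trans
    (LinearEquiv.prodAssoc Aᵐᵒᵖ P (Fin n → A) A).symm

theorem nonempty_linearEquiv_of_forall_isCancellable
    (hP : ∀ n, IsCancellable A (P × (Fin n → A))) (r t : ℕ)
    (φ : (Q × (Fin r → A)) ≃ₗ[Aᵐᵒᵖ] P × (Fin (t + r) → A)) :
    Nonempty (Q ≃ₗ[Aᵐᵒᵖ] P × (Fin t → A)) := by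
  induction r with
  | zero => exact ⟨LinearEquiv.prodUnique.symm.trans φ⟩
  | succ r ih =>
    obtain ⟨φ'⟩ := (hP (t + r)).nonempty_linearEquiv
      (((prodFinSuccEquiv A Q r).symm.trans φ).trans (prodFinSuccEquiv A P (t + r)))
    exact ih φ'

section Parity

variable {χ : A →+* ZMod 2}

theorem isReducible_row_of_ker_subset_range {g : P →ₗ[Aᵐᵒᵖ] A} {c : A} (hc : χ c = 1)
    (hg : ∀ x, χ x = 0 → ∃ p, g p = x) : IsReducible (row g c) :=
  isReducible_row_of_exists_apply_eq <| hg _ <| by rw [map_sub, map_one, hc, sub_self]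

theorem isReducible_row_row_of_mul_add_mul_eq_one {θ g : P →ₗ[Aᵐᵒᵖ] A} {b c w y : A}
    (h : b * w + c * y = 1) (hc : χ c = 1) (hθ : ∀ x, χ x = 0 → ∃ p, θ p = x) :
    IsReducible (row (row g b) c) := by
  let δ := θ - g
  refine .of_comp ((shearSnd (LinearMap.mulLeft Aᵐᵒᵖ w ∘ₗ δ)).prodCongr (.refl _ _)) ?_
  rw [row_comp_prodCongr_refl, row_comp_shearSnd]
  refine .of_comp (shearSnd (LinearMap.mulLeft Aᵐᵒᵖ y ∘ₗ δ ∘ₗ LinearMap.fst Aᵐᵒᵖ P A)) ?_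
  rw [row_comp_shearSnd]
  refine isReducible_row_of_ker_subset_range hc fun x hx => ?_
  obtain ⟨p, rfl⟩ := hθ x hx
  refine ⟨(p, 0), ?_⟩
  calc g p + b * (w * (θ p - g p)) + b * 0 + c * (y * (θ p - g p))
      = g p + (b * w + c * y) * (θ p - g p) := by noncomm_ring
    _ = θ p := by rw [h, one_mul, add_sub_cancel]

theorem isCancellable_prod_self [Module.Finite ℤ A]
    (hχ : ∀ x, χ x = 1 → ∃ (s : A) (n : ℤ), n ≠ 0 ∧ x * s = n) {θ : P →ₗ[Aᵐᵒᵖ] A}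
    (hθ : ∀ x, χ x = 0 → ∃ p, θ p = x) : IsCancellable A (P × A) := by
  intro f hf
  obtain ⟨G, c, rfl⟩ : ∃ G c, f = row G c := ⟨_, _, eq_row f⟩
  wlog hc : χ c = 1 generalizing c
  · obtain ⟨⟨p, x⟩, hpx⟩ := hf 1
    refine .of_comp (shearFst A p) ?_
    have hf' := hf.comp (shearFst A p).surjective
    rw [← LinearEquiv.coe_coe, ← LinearMap.coe_comp, row_comp_shearFst] at hf'
    rw [row_comp_shearFst]
    refine this _ hf' ?_
    have χ_c : χ c = 0 := (by decide : ∀ z : ZMod 2, z ≠ 1 → z = 0) _ hc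
    simpa [χ_c] using congrArg χ hpx
  obtain ⟨s, n, hn, hs⟩ := hχ c hc
  obtain ⟨g, b, rfl⟩ : ∃ g b, G = row g b := ⟨_, _, eq_row G⟩
  obtain ⟨⟨⟨p, y⟩, x⟩, hpyx⟩ := hf 1
  have unimodular : b * y + (g p + c * x) * 1 - 1 = 0 := by
    have g_add : g p + b * y + c * x = 1 := hpyx
    rw [mul_one, ← g_add]
    abel
  obtain ⟨t, w, q, hq⟩ :=
    exists_intCast_dvd_add_mul_mul_sub_one hn (unimodular ▸ dvd_zero (n : A))
  refine .of_comp ((shearFst A (MulOpposite.op t • p)).prodCongr (.refl _ _)) ?_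
  rw [row_comp_prodCongr_refl, row_comp_shearFst, map_op_smul]
  refine isReducible_row_row_of_mul_add_mul_eq_one (w := w) (y := x * t * w - s * q) ?_ hc hθ
  calc (b + g p * t) * w + c * (x * t * w - s * q)
      = (b + (g p + c * x) * t) * w - c * s * q := by noncomm_ring
    _ = 1 := by rw [hs, ← hq, sub_sub_cancel]

end Parity

theorem le_of_surjective_of_map_eq_zero {k : Type*} [CommRing k] [Nontrivial k] (χ : A →+* k)
    (hχ : Function.Surjective χ) (hP : ∀ (g : P →ₗ[Aᵐᵒᵖ] A) (p : P), χ (g p) = 0) {r s : ℕ}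
    (f : P × (Fin s → A) →ₗ[Aᵐᵒᵖ] Fin r → A) (hf : Function.Surjective f) : r ≤ s := by
  let M : Matrix (Fin r) (Fin s) k := .of fun i j => χ (f (0, Pi.single j 1) i)
  have χ_apply (p : P) (v : Fin s → A) : M.mulVec (χ ∘ v) = χ ∘ f (p, v) := by
    funext i
    have decomp : f (p, v) i = f (p, 0) i + ∑ j, f (0, Pi.single j 1) i * v j := by
      have pv_eq : (p, v) =
          (p, 0) + ∑ j, MulOpposite.op (v j) • ((0 : P), (Pi.single j 1 : Fin s → A)) := by
        ext l <;> simp [Pi.single_apply, Prod.fst_sum, Prod.snd_sum]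
      simp only [pv_eq, map_add, map_sum, map_smul, Pi.add_apply, Finset.sum_apply, Pi.smul_apply,
        op_smul_eq_mul]
    have χ_fst : χ (f (p, 0) i) = 0 :=
      hP (LinearMap.proj i ∘ₗ f ∘ₗ LinearMap.inl Aᵐᵒᵖ P (Fin s → A)) p
    simp [decomp, χ_fst, M, Matrix.mulVec, dotProduct]
  refine le_of_fin_surjective k M.mulVecLin fun c => ?_
  obtain ⟨w, rfl⟩ := hχ.comp_left c
  obtain ⟨⟨p, v⟩, rfl⟩ := hf w
  exact ⟨χ ∘ v, χ_apply p v⟩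

end Rows

section Integers

theorem exists_two_mul_abs_add_mul_le (a : ℤ) {b : ℤ} (hb : b ≠ 0) :
    ∃ s, 2 * |a + b * s| ≤ |b| := by
  refine ⟨-(b.sign * a.bdiv b.natAbs), ?_⟩
  have eq_bmod : a + b * -(b.sign * a.bdiv b.natAbs) = a.bmod b.natAbs := by
    rw [Int.bmod_eq_self_sub_mul_bdiv, mul_neg, ← mul_assoc, Int.mul_sign_self, sub_eq_add_neg]
  have natAbs_pos := Int.natAbs_pos.2 hb
  have le := Int.bmod_le (x := a) natAbs_pos
  have ge := Int.le_bmod (x := a) natAbs_pos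
  rw [eq_bmod, Int.abs_eq_natAbs, Int.abs_eq_natAbs]
  omega

theorem euclid_induction {P : ℤ → ℤ → Prop} (base : ∀ c, P (-1) c)
    (left : ∀ q c s, P (q + c * s) c → P q c) (right : ∀ q c t, P q (c + 2 * q * t) → P q c)
    {q c : ℤ} (hqc : IsCoprime (2 * q) c) : P q c := by
  induction hm : c.natAbs using Nat.strong_induction_on generalizing q c with | _ m ih =>
  by_cases c_unit : IsUnit c
  · refine left q c (-(c * (q + 1))) ?_
    convert! base c using 1
    linear_combination -(q + 1) * Int.isUnit_mul_self c_unit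
  have c_ne : c ≠ 0 := by
    rintro rfl
    exact Int.prime_two.not_isUnit (isUnit_of_mul_isUnit_left (isCoprime_zero_right.1 hqc))
  obtain ⟨s, hs⟩ := exists_two_mul_abs_add_mul_le q c_ne
  refine left q c s ?_
  have coprime_left : IsCoprime (2 * (q + c * s)) c := by
    convert! hqc.add_mul_left_left (2 * s) using 1
    ring
  generalize q + c * s = q' at hs coprime_left ⊢
  have q'_ne : q' ≠ 0 := by
    rintro rfl
    exact c_unit (isCoprime_zero_left.1 coprime_left)
  obtain ⟨t, ht⟩ := exists_two_mul_abs_add_mul_le c (mul_ne_zero two_ne_zero q'_ne)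
  refine right q' c t (ih _ ?_ (coprime_left.add_mul_left_right t) rfl)
  rw [abs_mul, abs_two] at ht
  have := abs_pos.2 c_ne
  zify [← hm]
  linarith

theorem exists_two_pow_mul_eq {n : ℤ} (hn : Odd n) (k : ℕ) : ∃ u v, 2 ^ k * u = 1 + n * v := by
  obtain ⟨u, v, huv⟩ := (Int.isCoprime_two_left.2 hn).pow_left (m := k)
  exact ⟨u, -v, by linear_combination huv⟩

end Integers

section Dihedral

open MonoidAlgebra DihedralGroup

local notation "ε" => augmentation ℤ (DihedralGroup 4)

local notation "N" => normElement ℤ (DihedralGroup 4)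

theorem gena_eq_single : gena = single (r 1) 1 := of_apply ..

theorem genb_eq_single : genb = single (sr 0) 1 := of_apply ..

theorem augmentation_gena : ε gena = 1 := by rw [gena_eq_single, augmentation_single]

theorem augmentation_genb : ε genb = 1 := by rw [genb_eq_single, augmentation_single]

theorem augmentation_sig : ε sig = 4 := by simp [sig, augmentation_gena]

theorem gena_pow_four : gena ^ 4 = 1 := by
  simp only [gena_eq_single, pow_succ, pow_zero, one_mul, single_mul_single]
  rfl

theorem genb_mul_genb : genb * genb = 1 := by
  simp only [genb_eq_single, single_mul_single]
  rfl

theorem gena_mul_genb_mul_gena : gena * genb * gena = genb := by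
  simp only [gena_eq_single, genb_eq_single, single_mul_single]
  rfl

theorem genb_mul_gena_mul_genb_mul_gena : genb * gena * (genb * gena) = 1 := by
  rw [mul_assoc, ← mul_assoc gena, gena_mul_genb_mul_gena, genb_mul_genb]

theorem gena_mul_sig : gena * sig = sig := by
  rw [← sub_eq_zero, ← sub_one_mul, sig, mul_geom_sum, gena_pow_four, sub_self]

theorem sig_mul_gena : sig * gena = sig := by
  rw [← sub_eq_zero, ← mul_sub_one, sig, geom_sum_mul, gena_pow_four, sub_self]

theorem sig_eq_sum : sig = ∑ i : ZMod 4, single (r i) 1 := by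
  simp only [sig, gena_eq_single, single_pow, r_one_pow, one_pow]
  exact Finset.sum_range fun i => (single (r i) 1 : R8)

theorem genb_mul_sig : genb * sig = ∑ i : ZMod 4, single (sr i) 1 := by
  simp [sig_eq_sum, genb_eq_single, Finset.mul_sum, single_mul_single]

theorem sig_mul_genb : sig * genb = genb * sig := by
  have neg_sum := Equiv.sum_comp (.neg (ZMod 4)) fun i => (single (sr i) 1 : R8)
  rw [genb_mul_sig, ← neg_sum]
  simp [sig_eq_sum, genb_eq_single, Finset.sum_mul, single_mul_single]

theorem one_add_genb_mul_sig : (1 + genb) * sig = N := by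
  rw [one_add_mul, genb_mul_sig, sig_eq_sum, normElement, ← equivSum.symm.sum_comp,
    Fintype.sum_sum_type]
  rfl

theorem gena_sub_one_mul : (gena - 1) * (3 + 2 * gena + gena ^ 2) = sig - 4 := by
  simp only [sig, Finset.sum_range_succ, Finset.sum_range_zero]
  grind

theorem closure_gena_genb : Subgroup.closure {(r 1 : DihedralGroup 4), sr 0} = ⊤ := by
  have r_mem (i : ZMod 4) : r i ∈ Subgroup.closure {(r 1 : DihedralGroup 4), sr 0} := by
    rw [← ZMod.natCast_zmod_val i, ← r_one_pow]
    exact pow_mem (Subgroup.subset_closure (by simp)) _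
  refine (Subgroup.eq_top_iff' _).2 fun g => ?_
  cases g with
  | r i => exact r_mem i
  | sr i =>
    rw [← zero_add i, ← sr_mul_r]
    exact mul_mem (Subgroup.subset_closure (by simp)) (r_mem i)

theorem isPGroup_dihedralGroup_four : IsPGroup 2 (DihedralGroup 4) :=
  .of_card (n := 3) (nat_card ..)

theorem exists_mul_eq_odd_intCast {x : R8} (hx : Odd (ε x)) :
    ∃ (s : R8) (n : ℤ), Odd n ∧ x * s = n := by
  obtain ⟨s, n, hn, hs⟩ := exists_mul_eq_intCast_of_not_dvd_augmentation
    isPGroup_dihedralGroup_four (x := x)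
    (by rwa [Nat.cast_two, ← even_iff_two_dvd, Int.not_even_iff_odd])
  obtain ⟨m, hm⟩ := hn
  exact ⟨s, n, ⟨m, eq_add_of_sub_eq hm⟩, hs⟩

namespace J

theorem mem_iff {x y z : R8} : (x, y, z) ∈ J ↔
    sig * x + (1 + genb * gena) * z = 0 ∧ (1 + genb) * y + (gena - 1) * z = 0 := by
  simp [J, bdry2, mulLeftOp]

/-- The coordinate `(x, y, z) ↦ x` on `J`. -/
def xCoord : J →ₗ[R8ᵐᵒᵖ] R8 := LinearMap.fst _ _ _ ∘ₗ J.subtype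

/-- The coordinate `(x, y, z) ↦ y` on `J`. -/
def yCoord : J →ₗ[R8ᵐᵒᵖ] R8 := LinearMap.fst _ _ _ ∘ₗ LinearMap.snd _ _ _ ∘ₗ J.subtype

/-- The coordinate `(x, y, z) ↦ z` on `J`. -/
def zCoord : J →ₗ[R8ᵐᵒᵖ] R8 := LinearMap.snd _ _ _ ∘ₗ LinearMap.snd _ _ _ ∘ₗ J.subtype

@[ext]
theorem ext {i j : J} (hx : xCoord i = xCoord j) (hy : yCoord i = yCoord j)
    (hz : zCoord i = zCoord j) : i = j :=
  Subtype.ext (Prod.ext hx (Prod.ext hy hz))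

theorem sig_mul_xCoord_add (j : J) : sig * xCoord j + (1 + genb * gena) * zCoord j = 0 :=
  (mem_iff.1 j.2).1

theorem one_add_genb_mul_yCoord_add (j : J) :
    (1 + genb) * yCoord j + (gena - 1) * zCoord j = 0 :=
  (mem_iff.1 j.2).2

/-- The element `(x, y, z)` of `J`. -/
def mk {x y z : R8} (h₁ : sig * x + (1 + genb * gena) * z = 0)
    (h₂ : (1 + genb) * y + (gena - 1) * z = 0) : J :=
  ⟨(x, y, z), mem_iff.2 ⟨h₁, h₂⟩⟩

section mk

variable {x y z : R8} (h₁ : sig * x + (1 + genb * gena) * z = 0)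
  (h₂ : (1 + genb) * y + (gena - 1) * z = 0)

@[simp]
theorem xCoord_mk : xCoord (mk h₁ h₂) = x := rfl

@[simp]
theorem yCoord_mk : yCoord (mk h₁ h₂) = y := rfl

@[simp]
theorem zCoord_mk : zCoord (mk h₁ h₂) = z := rfl

end mk

/-- The element `(a - 1, 0, 0)` of `J`. -/
def e₁ : J := mk (x := gena - 1) (y := 0) (z := 0) (by rw [mul_sub_one, sig_mul_gena]; simp)
  (by simp)

/-- The element `(0, 1 - b, 0)` of `J`. -/
def e₂ : J := mk (x := 0) (y := 1 - genb) (z := 0) (by simp) <| by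
  rw [mul_one_sub, one_add_mul, genb_mul_genb]
  simp [add_comm]

/-- The element `(0, 1 - a, 1 - ba)` of `J`. -/
def e₃ : J := mk (x := 0) (y := 1 - gena) (z := 1 - genb * gena)
  (by
    rw [mul_one_sub, one_add_mul, genb_mul_gena_mul_genb_mul_gena]
    simp [add_comm])
  (by
    rw [mul_one_sub, sub_one_mul, mul_one_sub, ← mul_assoc, gena_mul_genb_mul_gena]
    noncomm_ring)

/-- The element `(-(1 + b), 0, Σ)` of `J`. -/
def e₄ : J := mk (x := -(1 + genb)) (y := 0) (z := sig)
  (by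
    rw [mul_neg, mul_one_add, one_add_mul, sig_mul_genb, mul_assoc, gena_mul_sig, neg_add_cancel])
  (by rw [sub_one_mul, gena_mul_sig]; simp)

/-- The element `(N, 0, -2N)` of `J`, where `N` is the norm element. -/
def ν : J := mk (x := N) (y := 0) (z := -2 • N)
  (by
    rw [mul_normElement, mul_smul_comm, mul_normElement, augmentation_sig]
    simp only [map_add, map_mul, map_one, augmentation_gena, augmentation_genb]
    module)
  (by rw [mul_smul_comm, mul_normElement, map_sub, augmentation_gena]; simp)

theorem augmentation_yCoord (j : J) : ε (yCoord j) = 0 := by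
  simpa [augmentation_gena, augmentation_genb] using
    congrArg ε (one_add_genb_mul_yCoord_add j)

theorem augmentation_zCoord (j : J) : ε (zCoord j) = -2 * ε (xCoord j) := by
  have := congrArg ε (sig_mul_xCoord_add j)
  simp only [map_add, map_mul, map_one, map_zero, augmentation_sig, augmentation_gena,
    augmentation_genb] at this
  linarith

theorem even_augmentation_xCoord (j : J) : Even (ε (xCoord j)) := by
  have genb_mul : genb * (sig * xCoord j) = sig * xCoord j := by
    have ba_mul : (1 - genb * gena) * (sig * xCoord j) = 0 := by
      rw [eq_neg_of_add_eq_zero_left (sig_mul_xCoord_add j), mul_neg, ← mul_assoc, one_sub_mul,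
        mul_one_add, genb_mul_gena_mul_genb_mul_gena, add_comm, sub_self, zero_mul, neg_zero]
    rw [one_sub_mul, mul_assoc, ← mul_assoc gena, gena_mul_sig, sub_eq_zero] at ba_mul
    exact ba_mul.symm
  have norm_mul : ε (xCoord j) • N = sig * xCoord j + sig * xCoord j := by
    rw [← normElement_mul, ← one_add_genb_mul_sig, mul_assoc, one_add_mul, genb_mul]
  refine ⟨(sig * xCoord j).coeff 1, ?_⟩
  simpa [-zsmul_eq_mul] using congrArg (fun y => y.coeff 1) norm_mul

theorem op_normElement_smul (j : J) : MulOpposite.op N • j = ε (xCoord j) • ν := by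
  ext1 <;> rw [map_op_smul, mul_normElement, map_zsmul]
  · rfl
  · rw [augmentation_yCoord, zero_smul]
    exact (smul_zero _).symm
  · rw [augmentation_zCoord, mul_comm, mul_smul]
    rfl

/-- The degree of a homomorphism `g : J → ℤ[D₈]`, the integer `d` with `ε (g j) = ε (xCoord j) * d`
for all `j`. -/
def degree : (J →ₗ[R8ᵐᵒᵖ] R8) →+ ℤ where
  toFun g := (g ν).coeff 1
  map_zero' := rfl
  map_add' _ _ := rfl

theorem degree_apply (g : J →ₗ[R8ᵐᵒᵖ] R8) : degree g = (g ν).coeff 1 := rfl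

theorem augmentation_map (g : J →ₗ[R8ᵐᵒᵖ] R8) (j : J) :
    ε (g j) = ε (xCoord j) * degree g := by
  have map_eq := congrArg g (op_normElement_smul j)
  rw [map_op_smul, mul_normElement, map_zsmul] at map_eq
  simpa [degree_apply, -zsmul_eq_mul] using congrArg (fun x => x.coeff 1) map_eq

theorem even_augmentation_map (g : J →ₗ[R8ᵐᵒᵖ] R8) (j : J) : Even (ε (g j)) := by
  rw [augmentation_map]
  exact (even_augmentation_xCoord j).mul_right _

theorem augmentation_map_e₄ (g : J →ₗ[R8ᵐᵒᵖ] R8) : ε (g e₄) = -2 * degree g := by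
  rw [augmentation_map]
  simp [e₄, augmentation_genb]

theorem degree_mulLeft_comp (g : J →ₗ[R8ᵐᵒᵖ] R8) (c : R8) :
    degree (LinearMap.mulLeft R8ᵐᵒᵖ c ∘ₗ g) = ε c * degree g := by
  have := augmentation_map_e₄ (LinearMap.mulLeft R8ᵐᵒᵖ c ∘ₗ g)
  rw [LinearMap.comp_apply, LinearMap.mulLeft_apply, map_mul, augmentation_map_e₄] at this
  linarith

theorem degree_xCoord : degree xCoord = 1 := by simp [degree_apply, ν]

/-- The sum of the coordinates. Its image is the ideal of elements of even augmentation. -/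
def coordSum : J →ₗ[R8ᵐᵒᵖ] R8 := xCoord + yCoord + zCoord

theorem coordSum_apply (j : J) : coordSum j = xCoord j + yCoord j + zCoord j := rfl

theorem degree_coordSum : degree coordSum = -1 := by
  simp [-neg_smul, -zsmul_eq_mul, degree_apply, coordSum_apply, ν]

theorem exists_coordSum_eq {x : R8} (hx : Even (ε x)) : ∃ j, coordSum j = x := by
  let I := LinearMap.range coordSum
  have sub_mem (y : R8) : y - algebraMap ℤ R8 (ε y) ∈ I := by
    refine sub_augmentation_mem closure_gena_genb ?_ y
    rintro g (rfl | rfl)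
    · exact ⟨e₁, by simp [coordSum_apply, e₁, gena_eq_single]⟩
    · exact ⟨-e₂, by simp [coordSum_apply, e₂, genb_eq_single]⟩
  have two_mem : (2 : R8) ∈ I := by
    have := I.sub_mem (LinearMap.mem_range_self coordSum e₄) (sub_mem (coordSum e₄))
    rwa [augmentation_map_e₄, degree_coordSum, sub_sub_cancel, map_mul, map_neg, map_neg, map_one,
      neg_mul_neg, mul_one, map_ofNat] at this
  obtain ⟨k, hk⟩ := hx
  have := I.add_mem (sub_mem x) (I.smul_mem (MulOpposite.op (k : R8)) two_mem)
  rwa [hk, op_smul_eq_mul, ← two_mul, map_mul, map_ofNat, eq_intCast, sub_add_cancel] at this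

/-- An element of `J` with vanishing `y`-coordinate and coordinate sum `8`. -/
def κ : J := MulOpposite.op (3 + genb) • (e₄ - MulOpposite.op (3 + 2 * gena + gena ^ 2) • e₁)

theorem yCoord_κ : yCoord κ = 0 := by
  simp [κ, e₁, e₄]

theorem coordSum_κ : coordSum κ = 8 := by
  have coordSum_eq : coordSum (e₄ - MulOpposite.op (3 + 2 * gena + gena ^ 2) • e₁) = 3 - genb := by
    simp only [coordSum_apply, map_sub, map_op_smul, e₁, e₄, xCoord_mk, yCoord_mk, zCoord_mk,
      add_zero, gena_sub_one_mul]
    grind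
  rw [κ, map_op_smul, coordSum_eq, ← (Commute.ofNat_left 3 genb).mul_self_sub_mul_self_eq',
    genb_mul_genb]
  norm_num

/-- An element of `J` whose `y`-coordinate is `8` up to the norm element. -/
def ζ : J := MulOpposite.op sig • e₂ + (2 : ℤ) • MulOpposite.op (3 + 2 * gena + gena ^ 2) • e₃

theorem yCoord_ζ : yCoord ζ = 8 - N := by
  have one_sub_gena_mul : (1 - gena) * (3 + 2 * gena + gena ^ 2) = 4 - sig := by
    rw [← neg_sub gena, neg_mul, gena_sub_one_mul, neg_sub]
  rw [ζ, map_add, map_zsmul, map_op_smul, map_op_smul, e₂, e₃, yCoord_mk, yCoord_mk,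
    one_sub_gena_mul, ← one_add_genb_mul_sig, one_sub_mul, one_add_mul]
  grind

theorem exists_map_eq_of_even_augmentation {g h : J →ₗ[R8ᵐᵒᵖ] R8}
    (hg : g = coordSum + (16 : ℤ) • h) {n : ℤ}
    {q : R8} (hq : 1 + n • q ∈ LinearMap.range g) (hn : ((8 * n : ℤ) : R8) ∈ LinearMap.range g)
    {x : R8} (hx : Even (ε x)) : ∃ j, g j = x := by
  have mul_mem {y : R8} (hy : y ∈ LinearMap.range g) (z : R8) : y * z ∈ LinearMap.range g :=
    (LinearMap.range g).smul_mem (MulOpposite.op z) hy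
  obtain ⟨k, hk⟩ : (8 : R8) ∈ LinearMap.range g := by
    convert! sub_mem (mul_mem hq 8) (mul_mem hn q) using 1
    simp only [zsmul_eq_mul]
    push_cast
    grind
  obtain ⟨j, rfl⟩ := exists_coordSum_eq hx
  refine ⟨j - MulOpposite.op (2 * h j) • k, ?_⟩
  rw [map_sub, map_op_smul, hk, hg, LinearMap.add_apply, LinearMap.smul_apply, zsmul_eq_mul]
  grind

/-- The augmentation modulo `2`. -/
def parity : R8 →+* ZMod 2 := (Int.castRingHom (ZMod 2)).comp ε

theorem parity_eq_zero_iff {x : R8} : parity x = 0 ↔ Even (ε x) := ZMod.intCast_eq_zero_iff_even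

theorem parity_eq_one_iff {x : R8} : parity x = 1 ↔ Odd (ε x) := ZMod.intCast_eq_one_iff_odd

theorem parity_surjective : Function.Surjective parity := fun z =>
  ⟨(z.val : R8), by rw [map_natCast, ZMod.natCast_zmod_val]⟩

theorem parity_map (g : J →ₗ[R8ᵐᵒᵖ] R8) (j : J) : parity (g j) = 0 :=
  parity_eq_zero_iff.2 (even_augmentation_map g j)

theorem parity_eq_one_of_surjective {g : J →ₗ[R8ᵐᵒᵖ] R8} {c : R8}
    (hf : Function.Surjective (row g c)) : parity c = 1 := by
  obtain ⟨⟨j, x⟩, hjx⟩ := hf 1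
  have := congrArg parity hjx
  rw [row_apply, map_add, parity_map, zero_add, map_mul, map_one] at this
  exact (by decide : ∀ y z : ZMod 2, y * z = 1 → y = 1) _ _ this

theorem exists_map_ζ_mul_add_eq_eight {g : J →ₗ[R8ᵐᵒᵖ] R8} {c : R8}
    (hf : Function.Surjective (row g c)) :
    ∃ (k : J) (x y : R8), yCoord k = 0 ∧ g ζ * y + (g k + (8 : ℤ) • (c * x)) = (8 : ℤ) • 1 := by
  obtain ⟨⟨j, x⟩, hjx⟩ := hf 1
  refine ⟨(8 : ℤ) • j - MulOpposite.op (yCoord j) • ζ, x, yCoord j, ?_, ?_⟩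
  · rw [map_sub, map_zsmul, map_op_smul, yCoord_ζ, sub_mul, normElement_mul, augmentation_yCoord]
    grind
  · rw [map_sub, map_zsmul, map_op_smul, ← hjx, row_apply]
    abel

theorem exists_map_ζ_add_mul_eq_one_add_smul {g : J →ₗ[R8ᵐᵒᵖ] R8} {c : R8}
    (hf : Function.Surjective (row g c)) {n : ℤ} (hn : Odd n) : ∃ (k : J) (x w q : R8),
      yCoord k = 0 ∧ (g ζ + g k + (8 : ℤ) • (c * x)) * w = 1 + n • q := by
  obtain ⟨k, x, y, yCoord_k, map_eq⟩ := exists_map_ζ_mul_add_eq_eight hf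
  obtain ⟨u, v, huv⟩ := exists_two_pow_mul_eq hn 3
  obtain ⟨t, w, q, hq⟩ := exists_intCast_dvd_add_mul_mul_sub_one (n := n) (a := g ζ)
    (b := g k + (8 : ℤ) • (c * x)) (y := u • y) (z := u • 1) (by rintro rfl; simp at hn) ⟨v • 1, by
      rw [mul_smul_comm, mul_smul_one, ← smul_add, map_eq, smul_smul, ← zsmul_eq_mul, smul_smul,
        ← sub_eq_iff_eq_add'.2 huv, sub_smul, one_smul]
      module⟩
  refine ⟨MulOpposite.op t • k, x * t, w, q, ?_, ?_⟩
  · rw [map_op_smul, yCoord_k, zero_mul]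
  · rw [zsmul_eq_mul q n, ← sub_eq_iff_eq_add'.1 hq, map_op_smul, add_mul (g k), smul_mul_assoc,
      mul_assoc c, add_assoc]

theorem exists_one_add_smul_mem_range {g : J →ₗ[R8ᵐᵒᵖ] R8} (hdeg : degree g = -1) {c : R8}
    (hf : Function.Surjective (row g c)) {n : ℤ} (hn : Odd n) :
    ∃ x q : R8, 1 + n • q ∈
      LinearMap.range (g + (16 : ℤ) • LinearMap.mulLeft R8ᵐᵒᵖ (c * x) ∘ₗ yCoord) := by
  obtain ⟨k, x, w, q, yCoord_k, hq⟩ := exists_map_ζ_add_mul_eq_one_add_smul hf hn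
  obtain ⟨u, v, huv⟩ := exists_two_pow_mul_eq hn 7
  let X := c * ((8 * u) • x)
  let g' := g + (16 : ℤ) • LinearMap.mulLeft R8ᵐᵒᵖ X ∘ₗ yCoord
  have X_eq : (128 : ℤ) • X = (8 : ℤ) • (c * x) + n • ((8 * v) • (c * x)) := by
    rw [show X = (8 * u) • (c * x) from mul_smul_comm ..]
    match_scalars
    linear_combination 8 * huv
  have map_ζ : g' ζ = g ζ + (128 : ℤ) • X - (16 * ε X) • N := by
    change g ζ + (16 : ℤ) • (X * yCoord ζ) = _
    rw [yCoord_ζ, mul_sub, mul_normElement, ← Int.cast_ofNat (n := 8), ← zsmul_eq_mul']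
    module
  have map_k : g' k = g k := by
    change g k + (16 : ℤ) • (X * yCoord k) = _
    rw [yCoord_k, mul_zero, smul_zero, add_zero]
  have map_normElement_e₄ : g' (MulOpposite.op N • e₄) = (2 : ℤ) • N := by
    rw [map_op_smul, mul_normElement, show g' e₄ = g e₄ + (16 : ℤ) • (X * 0) from rfl, mul_zero,
      smul_zero, add_zero, augmentation_map_e₄, hdeg, neg_mul_neg, mul_one]
  -- The last summand cancels the contribution of the norm element in `yCoord ζ = 8 - N`.
  refine ⟨(8 * u) • x, q + (8 * v) • (c * x * w),
    MulOpposite.op w • (ζ + k + (8 * ε X) • MulOpposite.op N • e₄), ?_⟩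
  calc g' (MulOpposite.op w • (ζ + k + (8 * ε X) • MulOpposite.op N • e₄))
      = (g ζ + g k + (8 : ℤ) • (c * x) + n • ((8 * v) • (c * x))) * w := by
        rw [map_op_smul, map_add, map_add, map_zsmul, map_k, map_ζ, map_normElement_e₄, X_eq]
        congr 1
        module
    _ = 1 + n • (q + (8 * v) • (c * x * w)) := by
        rw [add_mul, hq, smul_mul_assoc, smul_mul_assoc, smul_add, add_assoc]

theorem isReducible_row_of_eq_coordSum_add {g h : J →ₗ[R8ᵐᵒᵖ] R8}
    (hg : g = coordSum + (16 : ℤ) • h) (hdeg : degree g = -1) {c : R8}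
    (hf : Function.Surjective (row g c)) : IsReducible (row g c) := by
  have map_κ : g κ = (8 : ℤ) • (1 + (2 : ℤ) • h κ) := by
    rw [hg, LinearMap.add_apply, coordSum_κ, LinearMap.smul_apply, smul_add, smul_smul]
    simp
  have odd_aug : Odd (ε (1 + (2 : ℤ) • h κ)) := ⟨ε (h κ), by
    rw [map_add, map_one, map_zsmul, smul_eq_mul, add_comm]⟩
  obtain ⟨s, n, n_odd, hs⟩ := exists_mul_eq_odd_intCast odd_aug
  obtain ⟨x, q, hq⟩ := exists_one_add_smul_mem_range hdeg hf n_odd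
  let h' := LinearMap.mulLeft R8ᵐᵒᵖ (c * x) ∘ₗ yCoord
  refine .of_comp (shearSnd ((16 : ℤ) • LinearMap.mulLeft R8ᵐᵒᵖ x ∘ₗ yCoord)) ?_
  have comp_eq : g + LinearMap.mulLeft R8ᵐᵒᵖ c ∘ₗ
      ((16 : ℤ) • LinearMap.mulLeft R8ᵐᵒᵖ x ∘ₗ yCoord) = g + (16 : ℤ) • h' := by
    ext j
    simp [h', -zsmul_eq_mul]
  rw [row_comp_shearSnd, comp_eq]
  refine isReducible_row_of_ker_subset_range (parity_eq_one_of_surjective hf) fun y hy =>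
    exists_map_eq_of_even_augmentation (h := h + h') (by rw [hg, smul_add, add_assoc]) hq
      ⟨MulOpposite.op s • κ, ?_⟩ (parity_eq_zero_iff.1 hy)
  have map_κ' : (g + (16 : ℤ) • h') κ = g κ := by
    change g κ + (16 : ℤ) • (c * x * yCoord κ) = g κ
    rw [yCoord_κ, mul_zero, smul_zero, add_zero]
  rw [map_op_smul, map_κ', map_κ, smul_mul_assoc, hs, zsmul_eq_mul, Int.cast_mul]

theorem isReducible_row_of_degree_eq_neg_one {g : J →ₗ[R8ᵐᵒᵖ] R8} (hdeg : degree g = -1) {c : R8}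
    (hf : Function.Surjective (row g c)) : IsReducible (row g c) := by
  obtain ⟨s, n, n_odd, hs⟩ :=
    exists_mul_eq_odd_intCast (parity_eq_one_iff.1 (parity_eq_one_of_surjective hf))
  obtain ⟨u, v, huv⟩ := exists_two_pow_mul_eq n_odd 4
  let h := coordSum - g
  let H := LinearMap.mulLeft R8ᵐᵒᵖ (s * (-v : ℤ)) ∘ₗ h
  have comp_eq : g + LinearMap.mulLeft R8ᵐᵒᵖ c ∘ₗ H = coordSum + (16 : ℤ) • (-u : ℤ) • h := by
    refine LinearMap.ext fun j => ?_
    have mul_eq : c * (s * ((-v : ℤ) : R8)) = (1 : R8) - (16 * u : ℤ) • 1 := by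
      rw [← mul_assoc, hs, ← Int.cast_mul, zsmul_one, ← Int.cast_one, ← Int.cast_sub]
      congr 1
      linear_combination huv
    change g j + c * (s * ((-v : ℤ) : R8) * h j) = coordSum j + (16 : ℤ) • (-u : ℤ) • h j
    rw [← mul_assoc, mul_eq, sub_mul, one_mul, smul_mul_assoc, one_mul, LinearMap.sub_apply]
    module
  refine .of_comp_of_surjective (shearSnd H) (fun hf' => ?_) hf
  rw [row_comp_shearSnd, comp_eq] at hf' ⊢
  refine isReducible_row_of_eq_coordSum_add rfl ?_ hf'
  rw [map_add, map_zsmul, map_zsmul, map_sub, degree_coordSum, hdeg, sub_self, smul_zero, smul_zero,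
    add_zero]

theorem isCoprime_of_surjective {g : J →ₗ[R8ᵐᵒᵖ] R8} {c : R8}
    (hf : Function.Surjective (row g c)) : IsCoprime (2 * degree g) (ε c) := by
  obtain ⟨⟨j, x⟩, hjx⟩ := hf 1
  obtain ⟨k, hk⟩ := even_augmentation_xCoord j
  have := congrArg ε hjx
  rw [row_apply, map_add, map_mul, augmentation_map, hk, map_one] at this
  exact ⟨k, ε x, by linear_combination this⟩

theorem isCancellable : IsCancellable R8 J := by
  intro f hf
  obtain ⟨g, c, rfl⟩ : ∃ g c, f = row g c := ⟨_, _, eq_row f⟩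
  refine euclid_induction (P := fun q d => ∀ g c, degree g = q → ε c = d →
    Function.Surjective (row g c) → IsReducible (row g c)) ?base ?left ?right
    (isCoprime_of_surjective hf) g c rfl rfl hf
  case base => exact fun _ g c hdeg _ => isReducible_row_of_degree_eq_neg_one hdeg
  case left =>
    rintro _ _ s ih g c rfl rfl
    refine .of_comp_of_surjective (shearSnd (LinearMap.mulLeft R8ᵐᵒᵖ (s : R8) ∘ₗ xCoord)) ?_
    rw [row_comp_shearSnd]
    refine ih _ _ ?_ rfl
    rw [map_add, degree_mulLeft_comp, degree_mulLeft_comp, degree_xCoord, map_intCast, mul_one,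
      Int.cast_id]
  case right =>
    rintro _ _ t ih g c rfl rfl
    refine .of_comp_of_surjective (shearFst R8 (MulOpposite.op ((-t : ℤ) : R8) • e₄)) ?_
    rw [row_comp_shearFst, map_op_smul]
    refine ih _ _ rfl ?_
    rw [map_add, map_mul, augmentation_map_e₄, map_intCast]
    simp

theorem isCancellable_prod (n : ℕ) : IsCancellable R8 (J × (Fin n → R8)) := by
  cases n with
  | zero => exact isCancellable.congr LinearEquiv.prodUnique.symm
  | succ n =>
    refine (isCancellable_prod_self (χ := parity)
      (θ := coordSum ∘ₗ LinearMap.fst R8ᵐᵒᵖ J (Fin n → R8)) (fun x hx => ?_)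
      fun x hx => ?_).congr (prodFinSuccEquiv R8 J n).symm
    · obtain ⟨s, m, hm, hs⟩ := exists_mul_eq_odd_intCast (parity_eq_one_iff.1 hx)
      exact ⟨s, m, by rintro rfl; simp at hm, hs⟩
    · obtain ⟨j, hj⟩ := exists_coordSum_eq (parity_eq_zero_iff.1 hx)
      exact ⟨(j, 0), hj⟩

end J

end Dihedral

/-- If `M` is a finitely generated (right) `ℤ[D₈]`-module with
`M ⊕ ℤ[D₈]^r ≅ J ⊕ ℤ[D₈]^s`, then `s ≥ r` and `M ≅ J ⊕ ℤ[D₈]^{s−r}`. -/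
theorem stable_class_of_J (M : Type) [AddCommGroup M] [Module R8ᵐᵒᵖ M]
    [Module.Finite R8ᵐᵒᵖ M] (r s : ℕ)
    (h : Nonempty ((M × (Fin r → R8)) ≃ₗ[R8ᵐᵒᵖ] (↥J × (Fin s → R8)))) :
    r ≤ s ∧ Nonempty (M ≃ₗ[R8ᵐᵒᵖ] (↥J × (Fin (s - r) → R8))) := by
  obtain ⟨φ⟩ := h
  have r_le : r ≤ s := le_of_surjective_of_map_eq_zero J.parity J.parity_surjective J.parity_map
    (LinearMap.snd R8ᵐᵒᵖ M (Fin r → R8) ∘ₗ φ.symm) (Prod.snd_surjective.comp φ.symm.surjective)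
  obtain ⟨t, rfl⟩ := Nat.exists_eq_add_of_le' r_le
  rw [Nat.add_sub_cancel]
  exact ⟨r_le, nonempty_linearEquiv_of_forall_isCancellable J.isCancellable_prod r t φ⟩

end
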